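/- arXiv:1907.03662 — 3 statements merged into one kernel-verified Lean document; each statement's English description precedes it below -/
import Mathlib

section
/- Let 𝔫 be a 2-step nilpotent finite-dimensional real Lie algebra with inner product ⟨·,·⟩ and let T be a Killing–Yano tensor on (𝔫,⟨·,·⟩). Then ker T and range T are Lie ideals of 𝔫, they are mutually orthogonal with 𝔫 = ker T ⊕ range T, the subalgebra range T is T-invariant, T restricted to range T is invertible, and T restricted to range T satisfies the Killing–Yano equation with respect to the Levi-Civita product of the metric Lie algebra (range T, ⟨·,·⟩). -/
/-- `x` belongs to the center of the Lie algebra `V`. -/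
def IsCentral {V : Type*} [LieRing V] (x : V) : Prop := ∀ y : V, ⁅x, y⁆ = 0

/-- Membership in `𝔳 = 𝔷^⊥`, the orthogonal complement of the center with respect to the
inner product `B`. -/
def InVperp {V : Type*} [LieRing V] [LieAlgebra ℝ V]
    (B : V →ₗ[ℝ] V →ₗ[ℝ] ℝ) (x : V) : Prop :=
  ∀ z : V, IsCentral z → B x z = 0

/-- The Lie algebra `V` is 2-step nilpotent: non-abelian and `⁅⁅V,V⁆,V⁆ = 0`. -/
def TwoStepNilpotent (V : Type*) [LieRing V] : Prop :=
  (∃ x y : V, ⁅x, y⁆ ≠ 0) ∧ ∀ x y z : V, ⁅⁅x, y⁆, z⁆ = 0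

/-- A Killing–Yano tensor on `(V, B)`: a skew-symmetric endomorphism preserving the center
and satisfying `T⁅x,y⁆ = 3⁅Tx,y⁆` for `x, y ∈ 𝔳 = 𝔷^⊥`. -/
def IsKY {V : Type*} [LieRing V] [LieAlgebra ℝ V]
    (B : V →ₗ[ℝ] V →ₗ[ℝ] ℝ) (T : V →ₗ[ℝ] V) : Prop :=
  (∀ x y : V, B (T x) y = - B x (T y)) ∧
  (∀ z : V, IsCentral z → IsCentral (T z)) ∧
  (∀ x y : V, InVperp B x → InVperp B y → T ⁅x, y⁆ = (3 : ℝ) • ⁅T x, y⁆)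

/-- The Koszul formula characterizing the Levi-Civita product of `(V, B)`. -/
def IsLeviCivita {V : Type*} [LieRing V] [LieAlgebra ℝ V]
    (B : V →ₗ[ℝ] V →ₗ[ℝ] ℝ) (nab : V → V → V) : Prop :=
  ∀ x y z : V, 2 * B (nab x y) z = B ⁅x, y⁆ z - B ⁅y, z⁆ x + B ⁅z, x⁆ y

/-!
A Killing–Yano tensor preserves the center, so `T⁅x, y⁆ = 3⁅Tx, y⁆` extends from `𝔳` to all of
`𝔫 = 𝔷 ⊕ 𝔳`, where by antisymmetry of the bracket it also reads `T⁅x, y⁆ = 3⁅x, Ty⁆`; hence `ker T`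
and `range T` are ideals. Skew-symmetry makes them orthogonal, and positivity of the inner product
makes them complementary. The relation and skew-symmetry pass to the `T`-invariant subalgebra
`range T`, and on any metric Lie algebra they imply the Killing–Yano equation: writing
`Q = ⟨⁅Tz, x⁆, y⟩ + ⟨⁅Tz, y⁆, x⟩`, the Koszul formula gives
`⟨∇_x (Ty) + ∇_y (Tx), z⟩ = -Q = ⟨T(∇_x y + ∇_y x), z⟩`. With `c ≠ 0` in place of `3` the left side
would be `(1 - c) Q / 2`, and `c = 3` is what makes the two sides match.
-/

section BilinForm

open LinearMap

section CommRing

variable {R M : Type*} [CommRing R] [AddCommGroup M] [Module R M]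
  {B : LinearMap.BilinForm R M} {T : M →ₗ[R] M}

theorem apply_map_eq_neg_apply_map (hT : B.IsSkewAdjoint T) (x y : M) :
    B x (T y) = -B (T x) y := by
  rw [hT x y, Pi.neg_apply, map_neg, neg_neg]

theorem apply_eq_zero_of_mem_ker_of_mem_range (hT : B.IsSkewAdjoint T) {x y : M}
    (hx : x ∈ ker T) (hy : y ∈ range T) : B x y = 0 := by
  obtain ⟨w, rfl⟩ := hy
  rw [apply_map_eq_neg_apply_map hT, mem_ker.mp hx, map_zero₂, neg_zero]

theorem disjoint_ker_range_of_isSkewAdjoint (hB : (BilinMap.toQuadraticMap B).Anisotropic)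
    (hT : B.IsSkewAdjoint T) : Disjoint (ker T) (range T) :=
  Submodule.disjoint_def.mpr fun x hker hrange =>
    hB x (apply_eq_zero_of_mem_ker_of_mem_range hT hker hrange)

end CommRing

section Field

variable {K V : Type*} [Field K] [AddCommGroup V] [Module K V] [FiniteDimensional K V]
  {B : LinearMap.BilinForm K V}

theorem isCompl_ker_range_of_isSkewAdjoint (hB : (BilinMap.toQuadraticMap B).Anisotropic)
    {T : V →ₗ[K] V} (hT : B.IsSkewAdjoint T) : IsCompl (ker T) (range T) :=
  (Submodule.isCompl_iff_disjoint _ _ (by rw [add_comm, finrank_range_add_finrank_ker])).mpr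
    (disjoint_ker_range_of_isSkewAdjoint hB hT)

theorem isCompl_orthogonal_of_anisotropic (hB : (BilinMap.toQuadraticMap B).Anisotropic)
    (hsymm : B.IsSymm) (W : Submodule K V) : IsCompl W (B.orthogonal W) :=
  (BilinForm.isCompl_orthogonal_iff_disjoint hsymm.isRefl).mpr <|
    Submodule.disjoint_def.mpr fun x hx hperp => hB x (hperp x hx)

end Field

end BilinForm

section LieModule

variable {R L M N : Type*} [CommRing R] [LieRing L]
  [AddCommGroup M] [Module R M] [LieRingModule L M]
  [AddCommGroup N] [Module R N] [LieRingModule L N]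
  {c : R} {T : M →ₗ[R] N}

/-- The kernel of a linear map commuting with the Lie action up to the scalar `c`, as a Lie
submodule. On the adjoint module this is the ideal `ker T`. -/
def kerLieSubmodule (hT : ∀ (x : L) (m : M), T ⁅x, m⁆ = c • ⁅x, T m⁆) : LieSubmodule R L M where
  toSubmodule := LinearMap.ker T
  lie_mem {x m} hm := by
    change T ⁅x, m⁆ = 0
    rw [hT, LinearMap.mem_ker.mp hm, lie_zero, smul_zero]

/-- The range of a linear map commuting with the Lie action up to the unit `c`, as a Lie
submodule. On the adjoint module this is the ideal `range T`. -/
def rangeLieSubmodule (hc : IsUnit c) (hT : ∀ (x : L) (m : M), T ⁅x, m⁆ = c • ⁅x, T m⁆) :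
    LieSubmodule R L N where
  toSubmodule := LinearMap.range T
  lie_mem {x n} hn := by
    obtain ⟨m, rfl⟩ := hn
    obtain ⟨u, rfl⟩ := hc
    refine ⟨(↑u⁻¹ : R) • ⁅x, m⁆, ?_⟩
    rw [map_smul, hT, smul_smul, Units.inv_mul, one_smul]

end LieModule

section LieAlgebra

variable {R L : Type*} [CommRing R] [LieRing L] [LieAlgebra R L] {c : R} {T : L →ₗ[R] L}

theorem map_lie_eq_smul_lie_map_right (hT : ∀ x y, T ⁅x, y⁆ = c • ⁅T x, y⁆) (x y : L) :
    T ⁅x, y⁆ = c • ⁅x, T y⁆ := by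
  rw [← lie_skew, map_neg, hT, ← smul_neg, lie_skew]

theorem lie_map_left_eq_lie_map_right (hc : IsUnit c) (hT : ∀ x y, T ⁅x, y⁆ = c • ⁅T x, y⁆)
    (x y : L) : ⁅T x, y⁆ = ⁅x, T y⁆ :=
  hc.smul_left_cancel.mp ((hT x y).symm.trans (map_lie_eq_smul_lie_map_right hT x y))

variable (R) in
theorem isCentral_iff_mem_center {x : L} : IsCentral x ↔ x ∈ LieAlgebra.center R L :=
  forall_congr' fun y => by rw [← lie_skew, neg_eq_zero]

theorem map_lie_eq_smul_lie_map_left_of_codisjoint_center {W : Submodule R L}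
    (hW : Codisjoint (LieAlgebra.center R L).toSubmodule W)
    (hcenter : ∀ z ∈ LieAlgebra.center R L, T z ∈ LieAlgebra.center R L)
    (hT : ∀ x ∈ W, ∀ y ∈ W, T ⁅x, y⁆ = c • ⁅T x, y⁆) (x y : L) :
    T ⁅x, y⁆ = c • ⁅T x, y⁆ := by
  have lie_central {z : L} (hz : z ∈ LieAlgebra.center R L) (a : L) : ⁅a, z⁆ = 0 := hz a
  have central_lie {z : L} (hz : z ∈ LieAlgebra.center R L) (a : L) : ⁅z, a⁆ = 0 :=
    (isCentral_iff_mem_center R).mpr hz a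
  obtain ⟨z, v, hz, hv, rfl⟩ := Submodule.codisjoint_iff_exists_add_eq.mp hW x
  obtain ⟨z', v', hz', hv', rfl⟩ := Submodule.codisjoint_iff_exists_add_eq.mp hW y
  simp only [map_add, add_lie, lie_add, central_lie hz, central_lie (hcenter z hz),
    lie_central hz', zero_add, hT v hv v' hv']

end LieAlgebra

section KillingYano

open LinearMap

variable {V : Type*} [LieRing V] [LieAlgebra ℝ V] {B : LinearMap.BilinForm ℝ V} {T : V →ₗ[ℝ] V}

theorem IsKY.isSkewAdjoint (hT : IsKY B T) : B.IsSkewAdjoint T := fun x y => by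
  simpa using hT.1 x y

theorem IsKY.map_lie [FiniteDimensional ℝ V] (hB : (BilinMap.toQuadraticMap B).Anisotropic)
    (hsymm : B.IsSymm) (hT : IsKY B T) (x y : V) : T ⁅x, y⁆ = (3 : ℝ) • ⁅T x, y⁆ := by
  obtain ⟨-, hcenter, hlie⟩ := hT
  have inVperp {v : V} (hv : v ∈ B.orthogonal (LieAlgebra.center ℝ V).toSubmodule) :
      InVperp B v := fun z hz =>
    (hsymm.eq v z).trans (hv z ((isCentral_iff_mem_center ℝ).mp hz))
  refine map_lie_eq_smul_lie_map_left_of_codisjoint_center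
    (isCompl_orthogonal_of_anisotropic hB hsymm _).codisjoint ?_
    (fun v hv w hw => hlie v w (inVperp hv) (inVperp hw)) x y
  simpa only [isCentral_iff_mem_center ℝ] using hcenter

/-- The Killing–Yano equation for an endomorphism `S` with respect to a product `nab`, here the
Levi-Civita product of a metric Lie algebra. Neither map is required to be linear. -/
def KillingYanoEquation {V : Type*} [AddGroup V] (nab : V → V → V) (S : V → V) : Prop :=
  ∀ x y, nab x (S y) - S (nab x y) + nab y (S x) - S (nab y x) = 0

namespace IsLeviCivita

variable {nab : V → V → V}

theorem apply_add_apply_swap (hnab : IsLeviCivita B nab) (x y z : V) :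
    B (nab x y + nab y x) z = B ⁅z, x⁆ y + B ⁅z, y⁆ x := by
  have hxy := hnab x y z
  have hyx := hnab y x z
  rw [← lie_skew y z, map_neg₂] at hxy
  rw [← lie_skew x z, ← lie_skew y x, map_neg₂, map_neg₂] at hyx
  rw [map_add₂]
  linarith

theorem map_apply_add_apply_swap (hnab : IsLeviCivita B nab) (hskew : B.IsSkewAdjoint T)
    (x y z : V) : B (T (nab x y + nab y x)) z = -(B ⁅T z, x⁆ y + B ⁅T z, y⁆ x) := by
  rw [← hnab.apply_add_apply_swap, apply_map_eq_neg_apply_map hskew, neg_neg]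

theorem two_mul_apply_map_add_apply_map (hnab : IsLeviCivita B nab) (hskew : B.IsSkewAdjoint T)
    {c : ℝ} (hc : c ≠ 0) (hT : ∀ x y, T ⁅x, y⁆ = c • ⁅T x, y⁆) (x y z : V) :
    2 * B (nab x (T y) + nab y (T x)) z = (1 - c) * (B ⁅T z, x⁆ y + B ⁅T z, y⁆ x) := by
  have hcomm := lie_map_left_eq_lie_map_right hc.isUnit hT
  have hswap (u v : V) : ⁅T u, v⁆ = -⁅T v, u⁆ := by rw [hcomm, ← lie_skew]
  have hbracket : B ⁅x, T y⁆ z + B ⁅y, T x⁆ z = 0 := by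
    rw [← hcomm x, ← hcomm y, hswap y, map_neg₂, add_neg_cancel]
  have hadj (u v : V) : B ⁅z, u⁆ (T v) = -(c * B ⁅T z, u⁆ v) := by
    rw [apply_map_eq_neg_apply_map hskew, hT, map_smul₂, smul_eq_mul]
  have hxTy := hnab x (T y) z
  have hyTx := hnab y (T x) z
  rw [hadj, hswap, map_neg₂] at hxTy hyTx
  rw [map_add₂]
  linarith

theorem killingYanoEquation (hB : (BilinMap.toQuadraticMap B).Anisotropic)
    (hnab : IsLeviCivita B nab) (hskew : B.IsSkewAdjoint T)
    (hT : ∀ x y, T ⁅x, y⁆ = (3 : ℝ) • ⁅T x, y⁆) : KillingYanoEquation nab T := by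
  intro x y
  have heq : nab x (T y) + nab y (T x) = T (nab x y + nab y x) := by
    have happly (z : V) : B (nab x (T y) + nab y (T x) - T (nab x y + nab y x)) z = 0 := by
      rw [map_sub₂, hnab.map_apply_add_apply_swap hskew]
      linarith [hnab.two_mul_apply_map_add_apply_map hskew three_ne_zero hT x y z]
    exact sub_eq_zero.mp (hB _ (happly _))
  rw [map_add] at heq
  rw [sub_add_eq_add_sub, heq]
  abel

theorem killingYanoEquation_restrict (hB : (BilinMap.toQuadraticMap B).Anisotropic)
    (hskew : B.IsSkewAdjoint T) (hT : ∀ x y, T ⁅x, y⁆ = (3 : ℝ) • ⁅T x, y⁆)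
    {W : LieSubalgebra ℝ V} (hW : ∀ x ∈ W.toSubmodule, T x ∈ W.toSubmodule) {nab : W → W → W}
    (hnab : IsLeviCivita (B.restrict W.toSubmodule) nab) :
    KillingYanoEquation nab (T.restrict hW) :=
  killingYanoEquation (fun x hx => Subtype.ext (hB x hx)) hnab
    (fun x y => hskew x y) (fun x y => Subtype.ext (hT x y))

end IsLeviCivita

end KillingYano

theorem statement_4_general (V : Type*) [LieRing V] [LieAlgebra ℝ V] [FiniteDimensional ℝ V]
    (B : V →ₗ[ℝ] V →ₗ[ℝ] ℝ)
    (hsymm : ∀ x y : V, B x y = B y x) (hpos : ∀ x : V, x ≠ 0 → 0 < B x x)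
    (T : V →ₗ[ℝ] V) (hT : IsKY B T) :
    (∀ x : V, ∀ y ∈ LinearMap.ker T, ⁅x, y⁆ ∈ LinearMap.ker T) ∧
    (∀ x : V, ∀ y ∈ LinearMap.range T, ⁅x, y⁆ ∈ LinearMap.range T) ∧
    (∀ x ∈ LinearMap.ker T, ∀ y ∈ LinearMap.range T, B x y = 0) ∧
    LinearMap.ker T ⊓ LinearMap.range T = ⊥ ∧
    LinearMap.ker T ⊔ LinearMap.range T = ⊤ ∧
    (∀ x ∈ LinearMap.range T, T x ∈ LinearMap.range T) ∧
    (∀ x ∈ LinearMap.range T, T x = 0 → x = 0) ∧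
    (∀ y ∈ LinearMap.range T, ∃ x ∈ LinearMap.range T, T x = y) ∧
    (∀ nabR : LinearMap.range T → LinearMap.range T → LinearMap.range T,
      (∀ x y z : LinearMap.range T, 2 * B (nabR x y : V) (z : V) =
          B ⁅(x : V), (y : V)⁆ (z : V) - B ⁅(y : V), (z : V)⁆ (x : V)
            + B ⁅(z : V), (x : V)⁆ (y : V)) →
      ∀ TR : LinearMap.range T → LinearMap.range T,
        (∀ u : LinearMap.range T, (TR u : V) = T u) →
        ∀ x y : LinearMap.range T,
          nabR x (TR y) - TR (nabR x y) + nabR y (TR x) - TR (nabR y x) = 0) := by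
  have hB : (LinearMap.BilinMap.toQuadraticMap B).Anisotropic := fun x hx =>
    by_contra fun hne => (hpos x hne).ne' hx
  have hskew := hT.isSkewAdjoint
  have hleft := hT.map_lie hB ⟨hsymm⟩
  have hright := map_lie_eq_smul_lie_map_right hleft
  let I : LieIdeal ℝ V := rangeLieSubmodule (three_ne_zero (α := ℝ)).isUnit hright
  have hcompl := isCompl_ker_range_of_isSkewAdjoint hB hskew
  refine ⟨fun x y hy => (kerLieSubmodule hright).lie_mem hy, fun x y hy => I.lie_mem hy,
    fun x hx y hy => apply_eq_zero_of_mem_ker_of_mem_range hskew hx hy,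
    hcompl.inf_eq_bot, hcompl.sup_eq_top, fun x _ => LinearMap.mem_range_self T x,
    LinearMap.disjoint_ker.mp hcompl.disjoint.symm,
    fun y hy => (Submodule.map_eq_range_iff.mpr hcompl.codisjoint.symm).ge hy, ?_⟩
  intro nabR hnabR TR hTR
  obtain rfl : TR = T.restrict fun x _ => LinearMap.mem_range_self T x :=
    funext fun u => Subtype.ext (hTR u)
  exact IsLeviCivita.killingYanoEquation_restrict hB hskew hleft
    (W := I.toLieSubalgebra) _ hnabR

/-- for a KY tensor T on a 2-step nilpotent metric Lie algebra,
ker T and range T are orthogonal complementary Lie ideals, range T is T-invariant,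
T restricted to range T is invertible and satisfies the Killing-Yano equation of
the metric Lie algebra range T. -/
theorem statement_4 (V : Type*) [LieRing V] [LieAlgebra ℝ V] [FiniteDimensional ℝ V]
    (B : V →ₗ[ℝ] V →ₗ[ℝ] ℝ)
    (hsymm : ∀ x y : V, B x y = B y x) (hpos : ∀ x : V, x ≠ 0 → 0 < B x x)
    (h2 : TwoStepNilpotent V)
    (T : V →ₗ[ℝ] V) (hT : IsKY B T) :
    (∀ x : V, ∀ y ∈ LinearMap.ker T, ⁅x, y⁆ ∈ LinearMap.ker T) ∧
    (∀ x : V, ∀ y ∈ LinearMap.range T, ⁅x, y⁆ ∈ LinearMap.range T) ∧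
    (∀ x ∈ LinearMap.ker T, ∀ y ∈ LinearMap.range T, B x y = 0) ∧
    LinearMap.ker T ⊓ LinearMap.range T = ⊥ ∧
    LinearMap.ker T ⊔ LinearMap.range T = ⊤ ∧
    (∀ x ∈ LinearMap.range T, T x ∈ LinearMap.range T) ∧
    (∀ x ∈ LinearMap.range T, T x = 0 → x = 0) ∧
    (∀ y ∈ LinearMap.range T, ∃ x ∈ LinearMap.range T, T x = y) ∧
    (∀ nabR : LinearMap.range T → LinearMap.range T → LinearMap.range T,
      (∀ x y z : LinearMap.range T, 2 * B (nabR x y : V) (z : V) =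
          B ⁅(x : V), (y : V)⁆ (z : V) - B ⁅(y : V), (z : V)⁆ (x : V)
            + B ⁅(z : V), (x : V)⁆ (y : V)) →
      ∀ TR : LinearMap.range T → LinearMap.range T,
        (∀ u : LinearMap.range T, (TR u : V) = T u) →
        ∀ x y : LinearMap.range T,
          nabR x (TR y) - TR (nabR x y) + nabR y (TR x) - TR (nabR y x) = 0) :=
  statement_4_general V B hsymm hpos T hT
end

section
/- Let 𝔫 be a 2-step nilpotent finite-dimensional real Lie algebra with inner product ⟨·,·⟩ admitting a bi-invariant orthogonal complex structure, i.e. an endomorphism J with J² = −Id, ⟨Jx,y⟩ = −⟨x,Jy⟩ for all x,y, and J⁅x,y⁆ = ⁅Jx,y⁆ for all x,y ∈ 𝔫. Then there exists a Killing–Yano tensor T on (𝔫,⟨·,·⟩) which is invertible and not parallel with respect to the Levi-Civita product of (𝔫,⟨·,·⟩). -/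
/-!
Let `P` be the orthogonal projection onto `𝔷` and `T = J (1 + 2P)`, that is, `T = 3J` on `𝔷` and
`T = J` on `𝔳`. Being bi-invariant and skew, `J` preserves `𝔷` and `𝔳`, so it commutes with the
self-adjoint map `1 + 2P`, and `T` is skew. As `⁅x, y⁆ ∈ 𝔷`, `T⁅x, y⁆ = 3J⁅x, y⁆ = 3⁅Tx, y⁆` on `𝔳`.

An injective Killing–Yano tensor is never parallel: on `𝔳` the Koszul formula reads
`2∇_x y = ⁅x, y⁆`, so a parallel `T` satisfies `T⁅x, y⁆ = ⁅x, Ty⁆`, whereas the Killing–Yano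
condition gives `3⁅x, Ty⁆`. Hence `T` kills `⁅𝔳, 𝔳⁆ = ⁅𝔫, 𝔫⁆`.
-/

section LinearAlgebra

theorem bijective_of_apply_apply_eq_neg {G : Type*} [InvolutiveNeg G] {f : G → G}
    (hf : ∀ x, f (f x) = -x) : Function.Bijective f := by
  have hff : Function.Bijective (f ∘ f) := (funext hf : f ∘ f = Neg.neg) ▸ neg_involutive.bijective
  exact ⟨hff.injective.of_comp, hff.surjective.of_comp⟩

theorem isUnit_one_add_smul_of_isIdempotentElem {K A : Type*} [Field K] [Ring A] [Algebra K A]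
    {p : A} (hp : IsIdempotentElem p) {c : K} (hc : 1 + c ≠ 0) : IsUnit (1 + c • p) := by
  have hmul (a b : K) : (1 + a • p) * (1 + b • p) = 1 + (a + b + a * b) • p := by
    simp only [add_mul, mul_add, one_mul, mul_one, smul_mul_smul_comm, hp.eq]
    module
  have hinv : c + -(c / (1 + c)) + c * -(c / (1 + c)) = 0 := by field_simp; ring
  refine isUnit_iff_exists.2 ⟨1 + (-(c / (1 + c))) • p, ?_, ?_⟩
  · rw [hmul, hinv, zero_smul, add_zero]
  · rw [hmul, add_comm _ c, mul_comm _ c, hinv, zero_smul, add_zero]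

variable {R M : Type*} [CommRing R] [AddCommGroup M] [Module R M]
  {B : LinearMap.BilinForm R M} {W : Submodule R M}

theorem isSelfAdjoint_projection_orthogonal (hB : B.IsRefl) (hW : IsCompl W (B.orthogonal W)) :
    LinearMap.IsSelfAdjoint B (W.projection (B.orthogonal W) hW) := by
  intro x y
  set P := W.projection (B.orthogonal W) hW
  have hxy : B (P x) (y - P y) = 0 :=
    W.sub_projection_mem hW y _ (W.projection_apply_mem hW x)
  have hyx : B (x - P x) (P y) = 0 :=
    hB _ _ (W.sub_projection_mem hW x _ (W.projection_apply_mem hW y))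
  rw [map_sub, sub_eq_zero] at hxy
  rw [map_sub, LinearMap.sub_apply, sub_eq_zero] at hyx
  exact hxy.trans hyx.symm

theorem orthogonal_mem_invtSubmodule_of_skew {f : Module.End R M}
    (hf : ∀ x y, B (f x) y = -B x (f y)) (hfW : W ∈ f.invtSubmodule) :
    B.orthogonal W ∈ f.invtSubmodule := by
  intro x hx w hw
  rw [← neg_eq_zero, ← hf]
  exact hx (f w) (hfW hw)

theorem commute_projection_orthogonal_of_skew (hW : IsCompl W (B.orthogonal W))
    {f : Module.End R M} (hf : ∀ x y, B (f x) y = -B x (f y)) (hfW : W ∈ f.invtSubmodule) :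
    Commute (W.projection (B.orthogonal W) hW) f := by
  rw [LinearMap.IsIdempotentElem.commute_iff (W.isIdempotentElem_projection hW),
    Submodule.range_projection, Submodule.ker_projection]
  exact ⟨hfW, orthogonal_mem_invtSubmodule_of_skew hf hfW⟩

theorem isCompl_orthogonal_of_anisotropic_s7 {K E : Type*} [Field K] [AddCommGroup E] [Module K E]
    [FiniteDimensional K E] {B : LinearMap.BilinForm K E} (hB : B.IsRefl) {W : Submodule K E}
    (hW : ∀ x ∈ W, B x x = 0 → x = 0) : IsCompl W (B.orthogonal W) := by
  rw [LinearMap.BilinForm.isCompl_orthogonal_iff_disjoint hB, Submodule.disjoint_def]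
  exact fun x hx hx' ↦ hW x hx (hx' x hx)

end LinearAlgebra

section MetricLieAlgebra

open LieAlgebra

variable {V : Type*} [LieRing V] [LieAlgebra ℝ V] {B : LinearMap.BilinForm ℝ V}

theorem isCentral_iff_mem_center_s7 {x : V} : IsCentral x ↔ x ∈ (center ℝ V).toSubmodule := by
  rw [LieSubmodule.mem_toSubmodule, LieModule.mem_maxTrivSubmodule]
  exact forall_congr' fun y ↦ by rw [← lie_skew, neg_eq_zero]

theorem inVperp_iff_mem_orthogonal (hB : B.IsRefl) {x : V} :
    InVperp B x ↔ x ∈ B.orthogonal (center ℝ V).toSubmodule :=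
  ⟨fun hx z hz ↦ hB _ _ (hx z (isCentral_iff_mem_center_s7.2 hz)),
    fun hx z hz ↦ hB _ _ (hx z (isCentral_iff_mem_center_s7.1 hz))⟩

theorem exists_inVperp_lie_ne_zero (hB : B.IsRefl)
    (hZ : IsCompl (center ℝ V).toSubmodule (B.orthogonal (center ℝ V).toSubmodule))
    (hV : ∃ x y : V, ⁅x, y⁆ ≠ 0) : ∃ x y : V, InVperp B x ∧ InVperp B y ∧ ⁅x, y⁆ ≠ 0 := by
  obtain ⟨x, y, hxy⟩ := hV
  set P := (center ℝ V).toSubmodule.projection _ hZ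
  have hP (a b : V) : ⁅P a, b⁆ = 0 :=
    isCentral_iff_mem_center_s7.2 (Submodule.projection_apply_mem hZ a) b
  have hP' (a b : V) : ⁅a, P b⁆ = 0 := by rw [← lie_skew, hP, neg_zero]
  refine ⟨x - P x, y - P y, ?_, ?_, ?_⟩
  · exact (inVperp_iff_mem_orthogonal hB).2 (Submodule.sub_projection_mem hZ x)
  · exact (inVperp_iff_mem_orthogonal hB).2 (Submodule.sub_projection_mem hZ y)
  · rwa [sub_lie, hP, sub_zero, lie_sub, hP', sub_zero]

theorem IsLeviCivita.two_mul_apply_of_inVperp {nab : V → V → V} (hLC : IsLeviCivita B nab)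
    (hB : B.IsRefl) (hnil : ∀ x y : V, IsCentral ⁅x, y⁆) {x y : V} (hx : InVperp B x)
    (hy : InVperp B y) (z : V) : 2 * B (nab x y) z = B ⁅x, y⁆ z := by
  rw [hLC, hB _ _ (hx _ (hnil y z)), hB _ _ (hy _ (hnil z x)), sub_zero, add_zero]

namespace IsKY

variable {T : V →ₗ[ℝ] V}

theorem inVperp_apply (hT : IsKY B T) {x : V} (hx : InVperp B x) : InVperp B (T x) := by
  intro z hz
  rw [hT.1, hx _ (hT.2.1 z hz), neg_zero]

theorem apply_lie_eq_three_smul_lie_apply (hT : IsKY B T) {x y : V} (hx : InVperp B x)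
    (hy : InVperp B y) : T ⁅x, y⁆ = (3 : ℝ) • ⁅x, T y⁆ := by
  rw [← lie_skew, map_neg, hT.2.2 y x hy hx, ← smul_neg, lie_skew]

variable {nab : V → V → V}

theorem apply_lie_eq_zero_of_parallel (hT : IsKY B T) (hB : B.IsRefl)
    (hZ : Disjoint (center ℝ V).toSubmodule (B.orthogonal (center ℝ V).toSubmodule))
    (hnil : ∀ x y : V, IsCentral ⁅x, y⁆) (hLC : IsLeviCivita B nab)
    (hpar : ∀ x y, nab x (T y) = T (nab x y)) {x y : V} (hx : InVperp B x) (hy : InVperp B y) :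
    T ⁅x, y⁆ = 0 := by
  have hcentral : IsCentral (T ⁅x, y⁆) := hT.2.1 _ (hnil x y)
  have hperp : InVperp B (T ⁅x, y⁆) := by
    intro z _
    have hparallel : B (T ⁅x, y⁆) z = B ⁅x, T y⁆ z := calc
      B (T ⁅x, y⁆) z = -(2 * B (nab x y) (T z)) := by
        rw [hT.1, hLC.two_mul_apply_of_inVperp hB hnil hx hy]
      _ = 2 * B (nab x (T y)) z := by rw [hpar, hT.1, mul_neg]
      _ = B ⁅x, T y⁆ z := hLC.two_mul_apply_of_inVperp hB hnil hx (hT.inVperp_apply hy) z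
    have hKY : B (T ⁅x, y⁆) z = 3 * B ⁅x, T y⁆ z := by
      rw [hT.apply_lie_eq_three_smul_lie_apply hx hy, map_smul, LinearMap.smul_apply, smul_eq_mul]
    linarith
  exact Submodule.disjoint_def.1 hZ _ (isCentral_iff_mem_center_s7.1 hcentral)
    ((inVperp_iff_mem_orthogonal hB).1 hperp)

theorem not_parallel_of_injective (hT : IsKY B T) (hTinj : Function.Injective T) (hB : B.IsRefl)
    (hZ : IsCompl (center ℝ V).toSubmodule (B.orthogonal (center ℝ V).toSubmodule))
    (h2 : TwoStepNilpotent V) (hLC : IsLeviCivita B nab) :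
    ¬ ∀ x y, nab x (T y) = T (nab x y) := by
  intro hpar
  obtain ⟨x, y, hx, hy, hxy⟩ := exists_inVperp_lie_ne_zero hB hZ h2.1
  have hTxy : T ⁅x, y⁆ = 0 := hT.apply_lie_eq_zero_of_parallel hB hZ.disjoint h2.2 hLC hpar hx hy
  exact hxy ((map_eq_zero_iff T hTinj).1 hTxy)

end IsKY

variable {J : Module.End ℝ V}

theorem center_mem_invtSubmodule_of_biinvariant (hJ : ∀ x y, J ⁅x, y⁆ = ⁅J x, y⁆) :
    (center ℝ V).toSubmodule ∈ J.invtSubmodule := by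
  intro z hz
  refine isCentral_iff_mem_center_s7.1 fun y ↦ ?_
  rw [← hJ, isCentral_iff_mem_center_s7.2 hz, map_zero]

variable (hZ : IsCompl (center ℝ V).toSubmodule (B.orthogonal (center ℝ V).toSubmodule))

variable (J) in
/-- The endomorphism equal to `3J` on the center `𝔷` and to `J` on `𝔷^⊥`, the candidate
Killing–Yano tensor. It is encoded as `J (1 + 2P)`, with `P` the orthogonal projection onto `𝔷`. -/
noncomputable def tripleOnCenter : Module.End ℝ V :=
  J * (1 + (2 : ℝ) • (center ℝ V).toSubmodule.projection _ hZ)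

theorem tripleOnCenter_apply (x : V) : tripleOnCenter J hZ x =
    J (x + (2 : ℝ) • (center ℝ V).toSubmodule.projection _ hZ x) :=
  rfl

theorem tripleOnCenter_of_isCentral {x : V} (hx : IsCentral x) :
    tripleOnCenter J hZ x = (3 : ℝ) • J x := by
  rw [tripleOnCenter_apply,
    Submodule.projection_apply_of_mem_left hZ (isCentral_iff_mem_center_s7.1 hx), ← map_smul]
  congr 1
  module

theorem tripleOnCenter_of_inVperp (hB : B.IsRefl) {x : V} (hx : InVperp B x) :
    tripleOnCenter J hZ x = J x := by
  rw [tripleOnCenter_apply,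
    Submodule.projection_apply_of_mem_right hZ ((inVperp_iff_mem_orthogonal hB).1 hx),
    smul_zero, add_zero]

theorem tripleOnCenter_skew (hB : B.IsRefl) (hJskew : ∀ x y, B (J x) y = -B x (J y))
    (hJbi : ∀ x y, J ⁅x, y⁆ = ⁅J x, y⁆) (x y : V) :
    B (tripleOnCenter J hZ x) y = -B x (tripleOnCenter J hZ y) := by
  set P := (center ℝ V).toSubmodule.projection _ hZ
  have hPJ : P (J y) = J (P y) := LinearMap.congr_fun (commute_projection_orthogonal_of_skew hZ
    hJskew (center_mem_invtSubmodule_of_biinvariant hJbi)).eq y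
  have hP : B (P x) (J y) = B x (P (J y)) := isSelfAdjoint_projection_orthogonal hB hZ x (J y)
  calc B (tripleOnCenter J hZ x) y
      = -(B x (J y) + 2 * B (P x) (J y)) := by
        rw [tripleOnCenter_apply, hJskew, map_add, map_smul, LinearMap.add_apply,
          LinearMap.smul_apply, smul_eq_mul]
    _ = -B x (tripleOnCenter J hZ y) := by
        rw [hP, hPJ, tripleOnCenter_apply, map_add, map_smul, map_add, map_smul, smul_eq_mul]

theorem tripleOnCenter_bijective (hJ : Function.Bijective J) :
    Function.Bijective (tripleOnCenter J hZ) := by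
  rw [← Module.End.isUnit_iff] at hJ ⊢
  exact hJ.mul (isUnit_one_add_smul_of_isIdempotentElem
    (Submodule.isIdempotentElem_projection hZ) (by norm_num))

theorem isKY_tripleOnCenter (hB : B.IsRefl) (hnil : ∀ x y : V, IsCentral ⁅x, y⁆)
    (hJskew : ∀ x y, B (J x) y = -B x (J y)) (hJbi : ∀ x y, J ⁅x, y⁆ = ⁅J x, y⁆) :
    IsKY B (tripleOnCenter J hZ) := by
  refine ⟨tripleOnCenter_skew hZ hB hJskew hJbi, fun z hz y ↦ ?_, fun x y hx _ ↦ ?_⟩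
  · rw [tripleOnCenter_of_isCentral hZ hz, smul_lie, ← hJbi, hz y, map_zero, smul_zero]
  · rw [tripleOnCenter_of_isCentral hZ (hnil x y), tripleOnCenter_of_inVperp hZ hB hx, hJbi]

end MetricLieAlgebra

theorem statement_7_general {V : Type*} [LieRing V] [LieAlgebra ℝ V]
    {B : LinearMap.BilinForm ℝ V} (hB : B.IsRefl)
    (hZ : IsCompl (LieAlgebra.center ℝ V).toSubmodule
      (B.orthogonal (LieAlgebra.center ℝ V).toSubmodule))
    (h2 : TwoStepNilpotent V) {J : V →ₗ[ℝ] V} (hJ : Function.Bijective J)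
    (hJskew : ∀ x y, B (J x) y = -B x (J y)) (hJbi : ∀ x y, J ⁅x, y⁆ = ⁅J x, y⁆)
    {nab : V → V → V} (hLC : IsLeviCivita B nab) :
    ∃ T : V →ₗ[ℝ] V, IsKY B T ∧ Function.Bijective T ∧
      ¬ (∀ x y : V, nab x (T y) = T (nab x y)) := by
  have hKY : IsKY B (tripleOnCenter J hZ) := isKY_tripleOnCenter hZ hB h2.2 hJskew hJbi
  have hbij : Function.Bijective (tripleOnCenter J hZ) := tripleOnCenter_bijective hZ hJ
  exact ⟨_, hKY, hbij, hKY.not_parallel_of_injective hbij.injective hB hZ h2 hLC⟩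

/-- a 2-step nilpotent metric Lie algebra carrying a bi-invariant
orthogonal complex structure admits an invertible non-parallel KY tensor. -/
theorem statement_7 (V : Type*) [LieRing V] [LieAlgebra ℝ V] [FiniteDimensional ℝ V]
    (B : V →ₗ[ℝ] V →ₗ[ℝ] ℝ)
    (hsymm : ∀ x y : V, B x y = B y x) (hpos : ∀ x : V, x ≠ 0 → 0 < B x x)
    (h2 : TwoStepNilpotent V)
    (J : V →ₗ[ℝ] V) (hJ2 : ∀ x : V, J (J x) = -x)
    (hJskew : ∀ x y : V, B (J x) y = - B x (J y))
    (hJbi : ∀ x y : V, J ⁅x, y⁆ = ⁅J x, y⁆)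
    (nab : V → V → V) (hLC : IsLeviCivita B nab) :
    ∃ T : V →ₗ[ℝ] V, IsKY B T ∧ Function.Bijective T ∧
      ¬ (∀ x y : V, nab x (T y) = T (nab x y)) := by
  have hB : LinearMap.BilinForm.IsRefl B := fun x y hxy ↦ (hsymm y x).trans hxy
  have hZ : IsCompl (LieAlgebra.center ℝ V).toSubmodule _ :=
    isCompl_orthogonal_of_anisotropic_s7 hB fun x _ ↦ not_imp_not.1 fun h ↦ (hpos x h).ne'
  exact statement_7_general hB hZ h2 (bijective_of_apply_apply_eq_neg hJ2) hJskew hJbi hLC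
end

section
/- Let 𝔫 be a 2-step nilpotent finite-dimensional real Lie algebra with inner product ⟨·,·⟩, center 𝔷 and 𝔳 = 𝔷^⊥, and let B be a symmetric endomorphism of 𝔫 (⟨Bx,y⟩ = ⟨x,By⟩ for all x,y). Then B is a Codazzi tensor, i.e. ∇_x(By) − B(∇_x y) = ∇_y(Bx) − B(∇_y x) for all x,y where ∇ is the Levi-Civita product of (𝔫,⟨·,·⟩), if and only if B(𝔷) ⊆ 𝔷 and B⁅x,y⁆ = ⁅Bx,y⁆ for all x,y ∈ 𝔫. Moreover, these conditions imply that B is parallel: ∇_x(By) = B(∇_x y) for all x,y. -/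
/-!
Pair the Codazzi equation with `w` and eliminate `∇` by the Koszul formula; what remains is an
identity in brackets only. Put a central vector `z` in its first slot. If `w` is central too, the
identity collapses to `⟪⁅Bz, y⁆, w⟫ = 0`, so the central vector `⁅Bz, y⁆` vanishes by nondegeneracy
of the metric on the center, and `B` preserves the center. Given that, the same identity reads
`⟪⁅Bx, y⁆, z⟫ = ⟪B⁅x, y⁆, z⟫`, so the central vector `B⁅x, y⁆ - ⁅Bx, y⁆` vanishes as well.
Conversely, if `B` commutes with brackets, it can be moved freely between the entries of
`⟪⁅x, y⁆, w⟫`, hence through the Koszul formula.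
-/

section Codazzi

variable {R V : Type*} [CommRing R] [LieRing V] [LieAlgebra R V]

/-- `nab` is a Levi-Civita product for `g`: the Koszul formula of `IsLeviCivita`, over an arbitrary
commutative ring. -/
def IsKoszulProduct (g : V →ₗ[R] V →ₗ[R] R) (nab : V → V → V) : Prop :=
  ∀ x y z : V, 2 * g (nab x y) z = g ⁅x, y⁆ z - g ⁅y, z⁆ x + g ⁅z, x⁆ y

/-- `T` is a Codazzi tensor for the product `nab`: its covariant derivative `(∇_x T) y`, that is
`∇_x (T y) - T (∇_x y)`, is symmetric in `x` and `y`. -/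
def IsCodazzi (nab : V → V → V) (T : V →ₗ[R] V) : Prop :=
  ∀ x y : V, nab x (T y) - T (nab x y) = nab y (T x) - T (nab y x)

/-- `T` is parallel for the product `nab`: its covariant derivative vanishes. -/
def IsParallel (nab : V → V → V) (T : V →ₗ[R] V) : Prop :=
  ∀ x y : V, nab x (T y) = T (nab x y)

/-- The restriction of `g` to the center is nondegenerate. For indefinite `g` this does not follow
from nondegeneracy of `g` on `V`. -/
def CenterSeparating (g : V →ₗ[R] V →ₗ[R] R) : Prop :=
  ∀ z : V, IsCentral z → (∀ w : V, IsCentral w → g z w = 0) → z = 0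

theorem IsCentral.lie_right {z : V} (hz : IsCentral z) (x : V) : ⁅x, z⁆ = 0 := by
  rw [← lie_skew, hz, neg_zero]

theorem IsCentral.sub {z w : V} (hz : IsCentral z) (hw : IsCentral w) : IsCentral (z - w) :=
  fun x => by rw [sub_lie, hz, hw, sub_zero]

theorem apply_lie_skew (g : V →ₗ[R] V →ₗ[R] R) (x y z : V) : g ⁅x, y⁆ z = -g ⁅y, x⁆ z := by
  rw [← lie_skew, map_neg, LinearMap.neg_apply]

variable {g : V →ₗ[R] V →ₗ[R] R} {nab : V → V → V} {T : V →ₗ[R] V}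

theorem IsCodazzi.koszul_identity (hcod : IsCodazzi nab T) (hnab : IsKoszulProduct g nab)
    (hT : g.IsSelfAdjoint T) (x y w : V) :
    g ⁅x, T y⁆ w + g ⁅T x, y⁆ w - g ⁅T y, w⁆ x + g ⁅T x, w⁆ y + g ⁅w, x⁆ (T y) - g ⁅w, y⁆ (T x) =
      2 * g ⁅x, y⁆ (T w) := by
  have paired : g (nab x (T y)) w - g (nab x y) (T w) = g (nab y (T x)) w - g (nab y x) (T w) := by
    simpa only [map_sub, LinearMap.sub_apply, hT _ w] using congrArg (g · w) (hcod x y)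
  linear_combination 2 * paired - hnab x (T y) w + hnab x y (T w) + hnab y (T x) w
    - hnab y x (T w) - apply_lie_skew g y (T w) x + apply_lie_skew g x (T w) y
    - apply_lie_skew g y x (T w) + apply_lie_skew g y (T x) w

theorem IsCodazzi.koszul_identity_of_isCentral (hcod : IsCodazzi nab T)
    (hnab : IsKoszulProduct g nab) (hT : g.IsSelfAdjoint T) {z : V} (hz : IsCentral z) (y w : V) :
    g ⁅T z, y⁆ w + g ⁅T z, w⁆ y - g ⁅T y, w⁆ z = g ⁅w, y⁆ (T z) := by
  have h := hcod.koszul_identity hnab hT z y w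
  simp only [hz _, hz.lie_right, map_zero, LinearMap.zero_apply] at h
  linear_combination h

theorem IsCodazzi.isCentral_apply (hcod : IsCodazzi nab T) (hnab : IsKoszulProduct g nab)
    (hT : g.IsSelfAdjoint T) (hg : CenterSeparating g) (hnil : ∀ x y : V, IsCentral ⁅x, y⁆)
    {z : V} (hz : IsCentral z) : IsCentral (T z) := by
  refine fun y => hg _ (hnil _ _) fun w hw => ?_
  simpa only [hw _, hw.lie_right, map_zero, LinearMap.zero_apply, add_zero, sub_zero] using
    hcod.koszul_identity_of_isCentral hnab hT hz y w

theorem IsCodazzi.apply_lie (hcod : IsCodazzi nab T) (hnab : IsKoszulProduct g nab)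
    (hT : g.IsSelfAdjoint T) (hg : CenterSeparating g) (hnil : ∀ x y : V, IsCentral ⁅x, y⁆)
    (x y : V) : T ⁅x, y⁆ = ⁅T x, y⁆ := by
  have preserves_center {z : V} (hz : IsCentral z) : IsCentral (T z) :=
    hcod.isCentral_apply hnab hT hg hnil hz
  have central_diff : IsCentral (T ⁅x, y⁆ - ⁅T x, y⁆) :=
    (preserves_center (hnil x y)).sub (hnil (T x) y)
  refine sub_eq_zero.mp (hg _ central_diff fun z hz => ?_)
  have h := hcod.koszul_identity_of_isCentral hnab hT hz x y
  simp only [preserves_center hz _, map_zero, LinearMap.zero_apply] at h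
  rw [map_sub, LinearMap.sub_apply, hT]
  linear_combination h + apply_lie_skew g x y (T z)

theorem apply_lie_right_of_apply_lie (hlie : ∀ x y : V, T ⁅x, y⁆ = ⁅T x, y⁆) (x y : V) :
    T ⁅x, y⁆ = ⁅x, T y⁆ := by
  rw [← lie_skew, map_neg, hlie, lie_skew]

theorem IsParallel.isCodazzi (hpar : IsParallel nab T) : IsCodazzi nab T :=
  fun x y => by rw [hpar, hpar, sub_self, sub_self]

theorem isParallel_of_apply_lie (h2 : IsLeftRegular (2 : R)) (hnab : IsKoszulProduct g nab)
    (hT : g.IsSelfAdjoint T) (hg : g.SeparatingLeft) (hlie : ∀ x y : V, T ⁅x, y⁆ = ⁅T x, y⁆) :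
    IsParallel nab T := by
  have hlie' := apply_lie_right_of_apply_lie hlie
  refine fun x y => sub_eq_zero.mp (hg _ fun w => ?_)
  rw [map_sub, LinearMap.sub_apply, sub_eq_zero, hT]
  apply h2
  calc 2 * g (nab x (T y)) w
      = g ⁅x, T y⁆ w - g ⁅T y, w⁆ x + g ⁅w, x⁆ (T y) := hnab x (T y) w
    _ = g ⁅x, y⁆ (T w) - g ⁅y, T w⁆ x + g ⁅T w, x⁆ y := by
      rw [← hlie' x y, hT, ← hlie y w, hlie' y w, ← hT ⁅w, x⁆, hlie w x]
    _ = 2 * g (nab x y) (T w) := (hnab x y (T w)).symm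

theorem statement_13_general (h2 : IsLeftRegular (2 : R)) (hnab : IsKoszulProduct g nab)
    (hT : g.IsSelfAdjoint T) (hg : g.SeparatingLeft) (hgz : CenterSeparating g)
    (hnil : ∀ x y : V, IsCentral ⁅x, y⁆) :
    (IsCodazzi nab T ↔
      ((∀ z : V, IsCentral z → IsCentral (T z)) ∧ ∀ x y : V, T ⁅x, y⁆ = ⁅T x, y⁆)) ∧
    (((∀ z : V, IsCentral z → IsCentral (T z)) ∧ ∀ x y : V, T ⁅x, y⁆ = ⁅T x, y⁆) →
      IsParallel nab T) := by
  have parallel (hlie : ∀ x y : V, T ⁅x, y⁆ = ⁅T x, y⁆) : IsParallel nab T :=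
    isParallel_of_apply_lie h2 hnab hT hg hlie
  refine ⟨⟨fun hcod => ⟨fun z hz => ?_, ?_⟩, fun h => (parallel h.2).isCodazzi⟩,
    fun h => parallel h.2⟩
  · exact hcod.isCentral_apply hnab hT hgz hnil hz
  · exact hcod.apply_lie hnab hT hgz hnil

end Codazzi

/-- on a 2-step nilpotent metric Lie algebra, a symmetric endomorphism
is a Codazzi tensor iff it preserves the center and commutes with all brackets;
moreover these conditions imply it is parallel. -/
theorem statement_13 (V : Type*) [LieRing V] [LieAlgebra ℝ V] [FiniteDimensional ℝ V]
    (g : V →ₗ[ℝ] V →ₗ[ℝ] ℝ)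
    (hsymm : ∀ x y : V, g x y = g y x) (hpos : ∀ x : V, x ≠ 0 → 0 < g x x)
    (h2 : TwoStepNilpotent V)
    (nab : V → V → V) (hLC : IsLeviCivita g nab)
    (Bop : V →ₗ[ℝ] V) (hBsym : ∀ x y : V, g (Bop x) y = g x (Bop y)) :
    ((∀ x y : V, nab x (Bop y) - Bop (nab x y) = nab y (Bop x) - Bop (nab y x)) ↔
      ((∀ z : V, IsCentral z → IsCentral (Bop z)) ∧
        ∀ x y : V, Bop ⁅x, y⁆ = ⁅Bop x, y⁆)) ∧
    (((∀ z : V, IsCentral z → IsCentral (Bop z)) ∧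
        ∀ x y : V, Bop ⁅x, y⁆ = ⁅Bop x, y⁆) →
      ∀ x y : V, nab x (Bop y) = Bop (nab x y)) := by
  have anisotropic (x : V) (hx : g x x = 0) : x = 0 := by_contra fun h => (hpos x h).ne' hx
  exact statement_13_general (IsRegular.of_ne_zero two_ne_zero).left hLC hBsym
    (fun x h => anisotropic x (h x)) (fun z hz h => anisotropic z (h z hz)) h2.2
end
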